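/- Let (X, Σ, μ) be a subprobability space and let P = {P_i}_{i=1}^{∞} be a partition of X with h(μ; P) < ∞ such that μ(P_1) = max{μ(P_i) : i ∈ ℕ}. Let Q be a measurable set with P_1 ⊆ Q, and for k ∈ ℕ set Q_k = ⋃_{i=1}^{k} (P_i ∩ Q). Then for every k ∈ ℕ: sh(μ(Q_k)) + Σ_{i=1}^{∞} sh(μ(P_i ∖ Q_k)) ≥ sh(μ(Q)) + Σ_{i=1}^{∞} sh(μ(P_i ∖ Q)); that is, h(μ; {Q_k} ∪ P_{X∖Q_k}) ≥ h(μ; {Q} ∪ P_{X∖Q}). -/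

import Mathlib

open MeasureTheory ENNReal Filter

/-- The Shannon function `sh x = -x * log₂ x` (with `sh 0 = 0`, since `log 0 = 0`). -/
noncomputable def sh (x : ℝ) : ℝ := -x * Real.logb 2 x

/-- A (countable, ℕ-indexed) partition of `X` w.r.t. the measure `μ`:
measurable, pairwise disjoint sets whose union has null complement. -/
def IsPartition {X : Type*} [MeasurableSpace X] (μ : Measure X) (P : ℕ → Set X) : Prop :=
  (∀ i, MeasurableSet (P i)) ∧ Pairwise (Function.onFun Disjoint P) ∧
    μ (Set.univ \ ⋃ i, P i) = 0

/-- The entropy `h(μ; P) = Σ_i sh(μ(P_i)) ∈ [0,∞]` of a countable family of sets. -/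
noncomputable def partEntropy {X : Type*} [MeasurableSpace X]
    (μ : Measure X) (P : ℕ → Set X) : ℝ≥0∞ :=
  ∑' i, ENNReal.ofReal (sh ((μ (P i)).toReal))

/-- An error-control family: a family of measurable sets covering `X`. -/
def IsErrorControl {X : Type*} [MeasurableSpace X] (𝒬 : Set (Set X)) : Prop :=
  (∀ Q ∈ 𝒬, MeasurableSet Q) ∧ ⋃₀ 𝒬 = Set.univ

/-- `P` is `𝒬`-acceptable: every element of `P` is contained in some member of `𝒬`. -/
def Acceptable {X : Type*} (𝒬 : Set (Set X)) (P : ℕ → Set X) : Prop :=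
  ∀ i, ∃ Q ∈ 𝒬, P i ⊆ Q

/-- The entropy `H(μ; 𝒬)`: the infimum of entropies of `𝒬`-acceptable partitions
(`= ∞` if there is none). -/
noncomputable def coverEntropy {X : Type*} [MeasurableSpace X]
    (μ : Measure X) (𝒬 : Set (Set X)) : ℝ≥0∞ :=
  ⨅ (P : ℕ → Set X) (_ : IsPartition μ P) (_ : Acceptable 𝒬 P), partEntropy μ P

/-!
Suppose mass `a` is moved out of a cell of mass `a + b` into a cell of mass `q ≥ a + b`. The pair of
masses `{q, a + b}` becomes the more spread-out pair `{q + a, b}` with the same sum, so by concavity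
the entropy does not increase. Passing from `{Q_k} ∪ P_{X∖Q_k}` to `{Q} ∪ P_{X∖Q}` amounts to moving
every `(P i ∖ Q_k) ∩ Q` into `Q_k`, whose mass is at least `μ (P 0)` and only grows on the way.
Finitely many moves are handled by induction, infinitely many by continuity of `sh`.
-/

section Concave

variable {𝕜 β : Type*} [Field 𝕜] [LinearOrder 𝕜] [IsStrictOrderedRing 𝕜] [AddCommMonoid β]
  [PartialOrder β] [IsOrderedAddMonoid β] [Module 𝕜 β] {f : 𝕜 → β}

theorem concaveOn_map_add_map_le {s : Set 𝕜} (hf : ConcaveOn 𝕜 s f) {x y z w : 𝕜} (hx : x ∈ s)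
    (hw : w ∈ s) (hxy : x ≤ y) (hyw : y ≤ w) (hsum : x + w = y + z) : f x + f w ≤ f y + f z := by
  obtain ⟨t, u, ht, hu, htu, rfl⟩ : y ∈ segment 𝕜 x w := Icc_subset_segment ⟨hxy, hyw⟩
  have hz : u • x + t • w = z := by
    simp only [smul_eq_mul] at hsum ⊢
    linear_combination (x + w) * htu + hsum
  calc f x + f w = (t + u) • f x + (t + u) • f w := by rw [htu, one_smul, one_smul]
    _ = (t • f x + u • f w) + (u • f x + t • f w) := by module
    _ ≤ f (t • x + u • w) + f (u • x + t • w) :=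
      add_le_add (hf.2 hx hw ht hu htu) (hf.2 hx hw hu ht (by rwa [add_comm]))
    _ = f (t • x + u • w) + f z := by rw [hz]

theorem concaveOn_map_add_sum_add_sum_le {ι : Type*} (hf : ConcaveOn 𝕜 (Set.Ici 0) f) {q : 𝕜}
    {a b : ι → 𝕜} (t : Finset ι) (ha : ∀ i ∈ t, 0 ≤ a i) (hb : ∀ i ∈ t, 0 ≤ b i)
    (hab : ∀ i ∈ t, a i + b i ≤ q) :
    f (q + ∑ i ∈ t, a i) + ∑ i ∈ t, f (b i) ≤ f q + ∑ i ∈ t, f (a i + b i) := by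
  classical
  induction t using Finset.induction_on with
  | empty => simp
  | insert j t hj ih =>
    rw [Finset.forall_mem_insert] at ha hb hab
    rw [Finset.sum_insert hj, Finset.sum_insert hj, Finset.sum_insert hj]
    have hS : 0 ≤ ∑ i ∈ t, a i := Finset.sum_nonneg ha.2
    set S := ∑ i ∈ t, a i
    have hmove : f (b j) + f (q + (a j + S)) ≤ f (a j + b j) + f (q + S) := by
      apply concaveOn_map_add_map_le hf hb.1 (Set.mem_Ici.2 _) <;> linarith
    calc f (q + (a j + S)) + (f (b j) + ∑ i ∈ t, f (b i))
        = (f (b j) + f (q + (a j + S))) + ∑ i ∈ t, f (b i) := by abel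
      _ ≤ (f (a j + b j) + f (q + S)) + ∑ i ∈ t, f (b i) := by gcongr
      _ = f (a j + b j) + (f (q + S) + ∑ i ∈ t, f (b i)) := add_assoc ..
      _ ≤ f (a j + b j) + (f q + ∑ i ∈ t, f (a i + b i)) := by grw [ih ha.2 hb.2 hab.2]
      _ = f q + (f (a j + b j) + ∑ i ∈ t, f (a i + b i)) := add_left_comm ..

end Concave

theorem ofReal_concaveOn_map_add_tsum_le {ι : Type*} {f : ℝ → ℝ} (hf : ConcaveOn ℝ (Set.Ici 0) f)
    {q s : ℝ} {a b : ι → ℝ} (ha : ∀ i, 0 ≤ a i) (hb : ∀ i, 0 ≤ b i) (hq : 0 ≤ q)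
    (hab : ∀ i, a i + b i ≤ q) (hs : HasSum a s) (hcont : ContinuousAt f (q + s))
    (hf_nonneg : ∀ x ∈ Set.Icc 0 (q + s), 0 ≤ f x) :
    ENNReal.ofReal (f (q + s)) + ∑' i, ENNReal.ofReal (f (b i)) ≤
      ENNReal.ofReal (f q) + ∑' i, ENNReal.ofReal (f (a i + b i)) := by
  have hlim : Tendsto
      (fun t : Finset ι ↦ ENNReal.ofReal (f (q + ∑ i ∈ t, a i)) + ∑ i ∈ t, ENNReal.ofReal (f (b i)))
      atTop (nhds (ENNReal.ofReal (f (q + s)) + ∑' i, ENNReal.ofReal (f (b i)))) :=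
    (ENNReal.tendsto_ofReal (hcont.tendsto.comp (hs.const_add q))).add ENNReal.summable.hasSum
  refine le_of_tendsto' hlim fun t ↦ ?_
  have hts : ∑ i ∈ t, a i ≤ s := sum_le_hasSum t (fun i _ ↦ ha i) hs
  have ht : 0 ≤ ∑ i ∈ t, a i := Finset.sum_nonneg fun i _ ↦ ha i
  have hf_total : 0 ≤ f (q + ∑ i ∈ t, a i) := hf_nonneg _ ⟨by linarith, by linarith⟩
  have hf_q : 0 ≤ f q := hf_nonneg _ ⟨hq, by linarith⟩
  have hf_b (i) : 0 ≤ f (b i) := hf_nonneg _ ⟨hb i, by linarith [ha i, hab i]⟩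
  have hf_ab (i) : 0 ≤ f (a i + b i) :=
    hf_nonneg _ ⟨add_nonneg (ha i) (hb i), by linarith [hab i]⟩
  calc ENNReal.ofReal (f (q + ∑ i ∈ t, a i)) + ∑ i ∈ t, ENNReal.ofReal (f (b i))
      = ENNReal.ofReal (f (q + ∑ i ∈ t, a i) + ∑ i ∈ t, f (b i)) := by
        rw [ENNReal.ofReal_add hf_total (Finset.sum_nonneg fun i _ ↦ hf_b i),
          ENNReal.ofReal_sum_of_nonneg fun i _ ↦ hf_b i]
    _ ≤ ENNReal.ofReal (f q + ∑ i ∈ t, f (a i + b i)) :=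
        ENNReal.ofReal_le_ofReal <| concaveOn_map_add_sum_add_sum_le hf t (fun i _ ↦ ha i)
          (fun i _ ↦ hb i) fun i _ ↦ hab i
    _ = ENNReal.ofReal (f q) + ∑ i ∈ t, ENNReal.ofReal (f (a i + b i)) := by
        rw [ENNReal.ofReal_add hf_q (Finset.sum_nonneg fun i _ ↦ hf_ab i),
          ENNReal.ofReal_sum_of_nonneg fun i _ ↦ hf_ab i]
    _ ≤ ENNReal.ofReal (f q) + ∑' i, ENNReal.ofReal (f (a i + b i)) := by
        gcongr
        exact ENNReal.sum_le_tsum t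

theorem sh_eq_smul_negMulLog : sh = (Real.log 2)⁻¹ • Real.negMulLog := by
  ext x
  simp only [sh, Real.negMulLog, Real.logb, Pi.smul_apply, smul_eq_mul]
  ring

theorem concaveOn_sh : ConcaveOn ℝ (Set.Ici 0) sh :=
  sh_eq_smul_negMulLog ▸ Real.concaveOn_negMulLog.smul (by positivity)

theorem continuous_sh : Continuous sh :=
  sh_eq_smul_negMulLog ▸ Real.continuous_negMulLog.const_smul _

theorem sh_nonneg {x : ℝ} (hx₀ : 0 ≤ x) (hx₁ : x ≤ 1) : 0 ≤ sh x :=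
  mul_nonneg_of_nonpos_of_nonpos (neg_nonpos.2 hx₀) (Real.logb_nonpos one_lt_two hx₀ hx₁)

section Partition

variable {X : Type*} [MeasurableSpace X] {μ : Measure X} {P : ℕ → Set X}

theorem IsPartition.hasSum_measureReal_inter (hP : IsPartition μ P) {B : Set X} (hB : μ B ≠ ∞) :
    HasSum (fun i ↦ μ.real (P i ∩ B)) (μ.real B) := by
  obtain ⟨hmeas, hdisj, hnull⟩ := hP
  have hsum : μ B = ∑' i, μ (P i ∩ B) := by
    rw [← Set.compl_eq_univ_sdiff] at hnull
    calc μ B = μ.restrict B (⋃ i, P i) := by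
          rw [Measure.restrict_apply (.iUnion hmeas), Set.inter_comm, measure_inter_conull hnull]
      _ = ∑' i, μ.restrict B (P i) := measure_iUnion hdisj hmeas
      _ = ∑' i, μ (P i ∩ B) := by simp only [Measure.restrict_apply (hmeas _)]
  rw [measureReal_def, hsum]
  rw [hsum] at hB
  rw [ENNReal.tsum_toReal_eq (ENNReal.ne_top_of_tsum_ne_top hB)]
  exact ENNReal.hasSum_toReal hB

theorem stmt_9_general (hμ : μ Set.univ ≤ 1) (hP : IsPartition μ P) {A Q : Set X}
    (hA : MeasurableSet A) (hQ : MeasurableSet Q) (hAQ : A ⊆ Q) (hPA : ∀ i, μ (P i \ A) ≤ μ A) :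
    ENNReal.ofReal (sh (μ Q).toReal) + ∑' i, ENNReal.ofReal (sh (μ (P i \ Q)).toReal) ≤
      ENNReal.ofReal (sh (μ A).toReal) + ∑' i, ENNReal.ofReal (sh (μ (P i \ A)).toReal) := by
  have : IsFiniteMeasure μ := ⟨hμ.trans_lt one_lt_top⟩
  simp only [← measureReal_def]
  have hQ_eq : μ.real A + μ.real (Q \ A) = μ.real Q := by
    rw [measureReal_sdiff hAQ hA, add_sub_cancel]
  have hQ_le_one : μ.real Q ≤ 1 :=
    toReal_le_of_le_ofReal zero_le_one <| by simpa using (measure_mono Q.subset_univ).trans hμ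
  have hcell (i) : μ.real (P i ∩ (Q \ A)) + μ.real (P i \ Q) = μ.real (P i \ A) := by
    rw [← measureReal_inter_add_sdiff (s := P i \ A) hQ, sdiff_sdiff, sup_eq_right.2 hAQ,
      ← Set.inter_sdiff_assoc, Set.inter_sdiff_right_comm]
  have hcell_le (i) : μ.real (P i ∩ (Q \ A)) + μ.real (P i \ Q) ≤ μ.real A :=
    (hcell i).trans_le <| toReal_mono (measure_ne_top μ A) (hPA i)
  have habsorb := ofReal_concaveOn_map_add_tsum_le concaveOn_sh
    (fun _ ↦ measureReal_nonneg) (fun _ ↦ measureReal_nonneg) measureReal_nonneg hcell_le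
    (hP.hasSum_measureReal_inter (measure_ne_top μ (Q \ A))) continuous_sh.continuousAt
    fun x hx ↦ sh_nonneg hx.1 (hx.2.trans (hQ_eq.trans_le hQ_le_one))
  simpa only [hQ_eq, hcell] using habsorb

end Partition

/-- Step (13) of Lemma II.1: with `P 0` of maximal measure, `P 0 ⊆ Q`, and
`Q_k = ⋃_{i ≤ k} (P i ∩ Q)`, for every `k`:
`sh(μ Q_k) + Σ_i sh(μ(P i ∖ Q_k)) ≥ sh(μ Q) + Σ_i sh(μ(P i ∖ Q))`, i.e.
`h(μ; {Q_k} ∪ P_{X∖Q_k}) ≥ h(μ; {Q} ∪ P_{X∖Q})`. -/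
theorem stmt_9 {X : Type*} [MeasurableSpace X] (μ : Measure X) (hμ : μ Set.univ ≤ 1)
    (P : ℕ → Set X) (hP : IsPartition μ P) (hfin : partEntropy μ P ≠ ⊤)
    (hmax : ∀ i, μ (P i) ≤ μ (P 0))
    (Q : Set X) (hQ : MeasurableSet Q) (hsub : P 0 ⊆ Q) (k : ℕ) :
    ENNReal.ofReal (sh ((μ Q).toReal)) +
        ∑' i, ENNReal.ofReal (sh ((μ (P i \ Q)).toReal)) ≤
      ENNReal.ofReal (sh ((μ (⋃ i ∈ Finset.range (k + 1), P i ∩ Q)).toReal)) +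
        ∑' i, ENNReal.ofReal
          (sh ((μ (P i \ ⋃ j ∈ Finset.range (k + 1), P j ∩ Q)).toReal)) := by
  have hP₀ : P 0 ⊆ ⋃ i ∈ Finset.range (k + 1), P i ∩ Q := fun x hx ↦
    Set.mem_biUnion (Finset.mem_coe.2 (Finset.mem_range.2 k.succ_pos)) ⟨hx, hsub hx⟩
  exact stmt_9_general hμ hP (Finset.measurableSet_biUnion _ fun i _ ↦ (hP.1 i).inter hQ) hQ
    (Set.iUnion₂_subset fun _ _ ↦ Set.inter_subset_right)
    fun i ↦ (measure_mono Set.sdiff_subset).trans ((hmax i).trans (measure_mono hP₀))
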